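/- Let δ ∈ (0,1), c ≥ 0, and let F : C(2π) → C(2π) be a bounded linear operator satisfying ‖F(g) − g‖∞ ≤ (δ/(1−δ))·c·‖g‖∞ for all g ∈ C(2π). Then for every f ∈ C(2π) and all nonnegative integers m, n, dist(f, F(R_{mn}(2π))) ≤ ((1 + δ(c−1))/(1−δ))·dist(f, R_{mn}(2π)) + (δ·c/(1−δ))·‖f‖∞. -/

import Mathlib

open scoped Real

noncomputable section

abbrev Ipi : Set ℝ := Set.Icc (-Real.pi) Real.pi

lemma negPi_mem_Ipi : -Real.pi ∈ Ipi := ⟨le_rfl, neg_le_self Real.pi_pos.le⟩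
lemma pi_mem_Ipi : Real.pi ∈ Ipi := ⟨neg_le_self Real.pi_pos.le, le_rfl⟩

/-- The space `C(2π)` of continuous functions on `[-π, π]` with equal values at the
endpoints, as a submodule of `C([-π,π], ℝ)`. -/
def C2pi : Submodule ℝ C(Ipi, ℝ) where
  carrier := {f | f ⟨-Real.pi, negPi_mem_Ipi⟩ = f ⟨Real.pi, pi_mem_Ipi⟩}
  add_mem' := by
    intro f g hf hg
    simp only [Set.mem_setOf_eq, ContinuousMap.add_apply] at *
    rw [hf, hg]
  zero_mem' := rfl
  smul_mem' := by
    intro c f hf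
    simp only [Set.mem_setOf_eq, ContinuousMap.smul_apply] at *
    rw [hf]

def trigCos (k : ℕ) : C(Ipi, ℝ) := ⟨fun x => Real.cos (k * (x : ℝ)), by fun_prop⟩
def trigSin (k : ℕ) : C(Ipi, ℝ) := ⟨fun x => Real.sin (k * (x : ℝ)), by fun_prop⟩

/-- Trigonometric polynomials of degree at most `m`. -/
def TrigPoly (m : ℕ) : Submodule ℝ C(Ipi, ℝ) :=
  Submodule.span ℝ {f | ∃ k ≤ m, f = trigCos k ∨ f = trigSin k}

/-- Rational trigonometric functions of type `(m, n)`. -/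
def RatTrig (m n : ℕ) : Set C2pi :=
  {t | ∃ p ∈ TrigPoly m, ∃ q ∈ TrigPoly n, (∀ x, 0 < q x) ∧
    ∀ x, (t : C(Ipi, ℝ)) x = p x / q x}

/-- The set `R(2π)` of all rational trigonometric functions. -/
def RatTrigAll : Set C2pi := ⋃ (m : ℕ), ⋃ (n : ℕ), RatTrig m n

lemma infDist_image_le_mul_infDist_add {X Y : Type*} [PseudoMetricSpace X] [PseudoMetricSpace Y]
    {S : Set X} (hS : S.Nonempty) {F : X → Y} {x : X} {y : Y} {a b : ℝ} (ha : 0 ≤ a)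
    (h : ∀ t ∈ S, dist y (F t) ≤ a * dist x t + b) :
    Metric.infDist y (F '' S) ≤ a * Metric.infDist x S + b := by
  have : Nonempty S := hS.to_subtype
  rw [← sub_le_iff_le_add, Metric.infDist_eq_iInf (x := x), Real.mul_iInf_of_nonneg ha]
  refine le_ciInf fun t => sub_le_iff_le_add.2 ?_
  exact (Metric.infDist_le_dist_of_mem (Set.mem_image_of_mem F t.2)).trans (h t t.2)

section Approximation

variable {E : Type*} [SeminormedAddCommGroup E]

lemma norm_sub_le_of_norm_sub_le_mul_norm {K : ℝ} (hK : 0 ≤ K) {t u : E}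
    (h : ‖u - t‖ ≤ K * ‖t‖) (f : E) : ‖f - u‖ ≤ (1 + K) * ‖f - t‖ + K * ‖f‖ :=
  calc
    ‖f - u‖ ≤ ‖f - t‖ + ‖t - u‖ := norm_sub_le_norm_sub_add_norm_sub f t u
    _ ≤ ‖f - t‖ + K * ‖t‖ := by rw [norm_sub_rev t u]; gcongr
    _ ≤ ‖f - t‖ + K * (‖f‖ + ‖f - t‖) := by gcongr; exact norm_le_norm_add_norm_sub f t
    _ = (1 + K) * ‖f - t‖ + K * ‖f‖ := by ring

theorem infDist_image_le_of_norm_sub_le_mul_norm {K : ℝ} (hK : 0 ≤ K) {S : Set E}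
    (hS : S.Nonempty) {F : E → E} (hF : ∀ g ∈ S, ‖F g - g‖ ≤ K * ‖g‖) (f : E) :
    Metric.infDist f (F '' S) ≤ (1 + K) * Metric.infDist f S + K * ‖f‖ := by
  refine infDist_image_le_mul_infDist_add hS (by positivity) fun t ht => ?_
  simpa only [dist_eq_norm] using norm_sub_le_of_norm_sub_le_mul_norm hK (hF t ht) f

theorem stmt8_general {δ c : ℝ} (hδ : δ ∈ Set.Ico (0 : ℝ) 1) (hc : 0 ≤ c) {S : Set E}
    (hS : S.Nonempty) {F : E → E} (hF : ∀ g ∈ S, ‖F g - g‖ ≤ δ / (1 - δ) * c * ‖g‖) (f : E) :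
    Metric.infDist f (F '' S) ≤
      (1 + δ * (c - 1)) / (1 - δ) * Metric.infDist f S + δ * c / (1 - δ) * ‖f‖ := by
  have hδ' : 0 < 1 - δ := sub_pos.2 hδ.2
  have hK : 0 ≤ δ / (1 - δ) * c := mul_nonneg (div_nonneg hδ.1 hδ'.le) hc
  have hcoeff : (1 + δ * (c - 1)) / (1 - δ) = 1 + δ / (1 - δ) * c := by
    field_simp
    ring
  rw [hcoeff, ← div_mul_eq_mul_div]
  exact infDist_image_le_of_norm_sub_le_mul_norm hK hS hF f

end Approximation

lemma trigCos_zero : trigCos 0 = 1 := by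
  ext x
  simp [trigCos]

lemma one_mem_trigPoly (n : ℕ) : 1 ∈ TrigPoly n :=
  Submodule.subset_span ⟨0, n.zero_le, Or.inl trigCos_zero.symm⟩

lemma zero_mem_ratTrig (m n : ℕ) : 0 ∈ RatTrig m n :=
  ⟨0, (TrigPoly m).zero_mem, 1, one_mem_trigPoly n, fun _ => one_pos, fun _ => (zero_div _).symm⟩

theorem stmt8 (δ c : ℝ) (hδ : δ ∈ Set.Ioo (0 : ℝ) 1) (hc : 0 ≤ c)
    (F : C2pi →L[ℝ] C2pi)
    (hF : ∀ g : C2pi, ‖F g - g‖ ≤ δ / (1 - δ) * c * ‖g‖)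
    (f : C2pi) (m n : ℕ) :
    Metric.infDist f ((fun t => F t) '' RatTrig m n) ≤
      (1 + δ * (c - 1)) / (1 - δ) * Metric.infDist f (RatTrig m n) +
        δ * c / (1 - δ) * ‖f‖ :=
  stmt8_general ⟨hδ.1.le, hδ.2⟩ hc ⟨0, zero_mem_ratTrig m n⟩ (fun g _ => hF g) f
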